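/- Let μ be a shift-invariant Borel probability measure on the full shift Σ^ℕ whose topological support is all of Σ^ℕ. Then there exists a sequence (μ_n)_n of shift-invariant Borel probability measures on Σ^ℕ such that: (1) μ_n → μ weakly; (2) each μ_n is ergodic with respect to the shift; (3) h(μ_n) → h(μ). -/

import Mathlib

open MeasureTheory Filter Topology Metric Set
open scoped ENNReal NNReal Classical

namespace Multifractal

/-- Infinite strings over `{1,…,N}`. -/
abbrev Seq (N : ℕ) := ℕ → Fin N

/-- Finite strings over `{1,…,N}` (the empty string is excluded where appropriate). -/
abbrev Word (N : ℕ) := List (Fin N)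

variable {N : ℕ}

/-- The shift map on `Σ^ℕ`. -/
def shift : Seq N → Seq N := fun x n => x (n + 1)

/-- The cylinder `[w]` generated by a finite string `w`. -/
def cylinder (w : Word N) : Set (Seq N) :=
  {x : Seq N | ∀ (k : ℕ) (h : k < w.length), x k = w.get ⟨k, h⟩}

/-- Birkhoff sum `∑_{k<n} φ(S^k x)`. -/
noncomputable def birkhoff (φ : Seq N → ℝ) (n : ℕ) (x : Seq N) : ℝ :=
  ∑ k ∈ Finset.range n, φ (shift^[k] x)

/-- `s_w = sup_{x ∈ [w]} exp (∑_{k<|w|} Λ(S^k x))`. -/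
noncomputable def sWord (Λ : Seq N → ℝ) (w : Word N) : ℝ :=
  sSup ((fun x => Real.exp (birkhoff Λ w.length x)) '' cylinder w)

/-- Bounded distortion (condition (C3)): `exp(S_nΛ(i))/exp(S_nΛ(j)) ∈ [1/c, c]`
whenever `i|n = j|n`.  (By symmetry in `i,j` the one-sided bound suffices.) -/
def BddDistortion (Λ : Seq N → ℝ) (c : ℝ) : Prop :=
  ∀ (n : ℕ) (i j : Seq N), (∀ k < n, i k = j k) →
    Real.exp (birkhoff Λ n i) ≤ c * Real.exp (birkhoff Λ n j)

/-- The empirical measure `L_n x = (1/n) ∑_{k<n} δ_{S^k x}` (junk value `δ_x` for `n = 0`). -/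
noncomputable def emp (n : ℕ) (x : Seq N) : ProbabilityMeasure (Seq N) :=
  if h : n = 0 then ⟨Measure.dirac x, inferInstance⟩
  else
    ⟨(n : ℝ≥0∞)⁻¹ • ∑ k ∈ Finset.range n, Measure.dirac (shift^[k] x), by
      constructor
      simp only [Measure.smul_apply, Measure.coe_finset_sum, Finset.sum_apply, measure_univ,
        Finset.sum_const, Finset.card_range, nsmul_eq_mul, mul_one, smul_eq_mul]
      exact ENNReal.inv_mul_cancel (Nat.cast_ne_zero.mpr h) (ENNReal.natCast_ne_top n)⟩

/-- Shift invariance of a probability measure. -/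
def Invariant (μ : ProbabilityMeasure (Seq N)) : Prop :=
  μ.toMeasure.map shift = μ.toMeasure

/-- `n`-th partition entropy `-∑_{|w|=n} μ[w] log μ[w]`. -/
noncomputable def entropyAux (μ : ProbabilityMeasure (Seq N)) (n : ℕ) : ℝ :=
  -∑ w : Fin n → Fin N,
      (μ (cylinder (List.ofFn w)) : ℝ) * Real.log (μ (cylinder (List.ofFn w)) : ℝ)

/-- The Kolmogorov–Sinai entropy of a (shift-invariant) measure on the full shift,
via the generating partition into cylinders. -/
noncomputable def entropy (μ : ProbabilityMeasure (Seq N)) : ℝ :=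
  Filter.atTop.liminf fun n => entropyAux μ n / n

/-- Abscissa of convergence of the "zeta-function" `s ↦ ∑ a_w^s`, the sum ranging over the
nonempty finite strings satisfying `P`; values in `EReal` (so `⊤` if never summable and `⊥`
if always summable, e.g. for an empty index set). -/
noncomputable def sigmaAbs (a : Word N → ℝ) (P : Word N → Prop) : EReal :=
  sInf ((fun t : ℝ => (t : EReal)) ''
    {t : ℝ | Summable fun w : {w : Word N // w ≠ [] ∧ P w} => a w.1 ^ t})

variable {X : Type*}

/-- `U(L_{|w|}[w]) ⊆ B`. -/
def inTarget (U : ProbabilityMeasure (Seq N) → X) (B : Set X) (w : Word N) : Prop :=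
  ∀ x ∈ cylinder w, U (emp w.length x) ∈ B

/-- The closed `r`-neighbourhood `B(C,r)` of a set. -/
def cball [MetricSpace X] (C : Set X) (r : ℝ) : Set X := {x | infDist x C ≤ r}

/-- The counting function `N_δ^{U,Λ}(C,r)`: number of strings `w` with `s_w ≈ δ` and
`U(L_{|w|}[w]) ⊆ B(C,r)`. -/
noncomputable def Ncount [MetricSpace X] (Λ : Seq N → ℝ) (U : ProbabilityMeasure (Seq N) → X)
    (C : Set X) (r δ : ℝ) : ℕ :=
  Set.ncard {w : Word N | w ≠ [] ∧ sWord Λ w ≤ δ ∧ δ < sWord Λ w.dropLast ∧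
    inTarget U (cball C r) w}

/-- `log m / (-log δ)`, read as `-∞` when `m = 0`. -/
noncomputable def ratioE (m : ℕ) (δ : ℝ) : EReal :=
  if m = 0 then ⊥ else (((Real.log m) / (-Real.log δ) : ℝ) : EReal)

/-- The `r`-approximate lower coarse multifractal spectrum `f̲^{U,Λ}(C,r)`. -/
noncomputable def coarseLowerR [MetricSpace X] (Λ : Seq N → ℝ)
    (U : ProbabilityMeasure (Seq N) → X) (C : Set X) (r : ℝ) : EReal :=
  Filter.liminf (fun δ : ℝ => ratioE (Ncount Λ U C r δ) δ) (𝓝[>] (0 : ℝ))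

/-- The lower coarse multifractal spectrum `f̲^{U,Λ}(C) = lim_{r↘0} f̲^{U,Λ}(C,r)`;
since `f̲^{U,Λ}(C,r)` is nondecreasing in `r`, the limit is the infimum over `r > 0`. -/
noncomputable def coarseLower [MetricSpace X] (Λ : Seq N → ℝ)
    (U : ProbabilityMeasure (Seq N) → X) (C : Set X) : EReal :=
  ⨅ (r : ℝ) (_ : 0 < r), coarseLowerR Λ U C r

/-- The variational quantity `sup { -h(μ)/∫Λ dμ : μ shift-invariant, Uμ ∈ C }`. -/
noncomputable def varSup (Λ : Seq N → ℝ) (U : ProbabilityMeasure (Seq N) → X)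
    (C : Set X) : EReal :=
  sSup {x : EReal | ∃ μ : ProbabilityMeasure (Seq N), Invariant μ ∧ U μ ∈ C ∧
    x = ((-(entropy μ) / ∫ y, Λ y ∂μ.toMeasure : ℝ) : EReal)}

end Multifractal

namespace Multifractal

lemma negMulLog_sum_le {ι : Type*} (s : Finset ι) (x : ι → ℝ) (hx : ∀ i ∈ s, 0 ≤ x i) :
    Real.negMulLog (∑ i ∈ s, x i) ≤ ∑ i ∈ s, Real.negMulLog (x i) := by
  rw [Real.negMulLog, neg_mul, Finset.sum_mul, ← Finset.sum_neg_distrib]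
  refine Finset.sum_le_sum fun i hi => ?_
  rw [Real.negMulLog, neg_mul, neg_le_neg_iff]
  rcases (hx i hi).eq_or_lt with h | h
  · simp [← h]
  · exact mul_le_mul_of_nonneg_left
      (Real.log_le_log h (Finset.single_le_sum hx hi)) h.le

lemma sum_negMulLog_prod {α : Type*} [Fintype α] (p : α → ℝ) (hp : ∑ a, p a = 1) (q : ℕ) :
    ∑ a : Fin q → α, Real.negMulLog (∏ i, p (a i)) = q * ∑ a, Real.negMulLog (p a) := by
  induction q with
  | zero => simp
  | succ q ih =>
    have hone : ∑ a : Fin q → α, ∏ i, p (a i) = 1 := by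
      rw [← Fintype.prod_sum (fun (_ : Fin q) a => p a)]
      simp [hp]
    rw [← (Fin.consEquiv fun _ : Fin (q + 1) => α).sum_comp, Fintype.sum_prod_type]
    simp only [Fin.consEquiv_apply, Fin.prod_univ_succ, Fin.cons_zero, Fin.cons_succ,
      Real.negMulLog_mul, Finset.sum_add_distrib, ← Finset.sum_mul, ← Finset.mul_sum, hone, hp, ih]
    push_cast
    ring

/-- Shannon entropy of the partition generated by a finite-valued map. -/
noncomputable def partEntropy {Ω α : Type*} [MeasurableSpace Ω] [Fintype α] (P : Measure Ω)
    (f : Ω → α) : ℝ :=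
  ∑ a, Real.negMulLog (P.real (f ⁻¹' {a}))

lemma partEntropy_nonneg {Ω α : Type*} [MeasurableSpace Ω] [Fintype α] (P : Measure Ω)
    [IsProbabilityMeasure P] (f : Ω → α) : 0 ≤ partEntropy P f :=
  Finset.sum_nonneg fun _ _ => Real.negMulLog_nonneg measureReal_nonneg measureReal_le_one

section PartitionEntropy

variable {Ω Ω' α β : Type*} [MeasurableSpace Ω] [MeasurableSpace Ω'] [Fintype α] [Fintype β]
  [MeasurableSpace α] [MeasurableSingletonClass α]

lemma partEntropy_map (P : Measure Ω) {g : Ω → Ω'} (hg : Measurable g) {f : Ω' → α}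
    (hf : Measurable f) : partEntropy (P.map g) f = partEntropy P (f ∘ g) := by
  refine Finset.sum_congr rfl fun a _ => ?_
  rw [map_measureReal_apply hg (hf (measurableSet_singleton a)), preimage_comp]

lemma partEntropy_comp_le (P : Measure Ω) [IsFiniteMeasure P] {f : Ω → α} (hf : Measurable f)
    (g : α → β) : partEntropy P (g ∘ f) ≤ partEntropy P f := by
  unfold partEntropy
  rw [← Finset.sum_fiberwise Finset.univ g]
  refine Finset.sum_le_sum fun b _ => ?_
  refine le_of_eq_of_le ?_ (negMulLog_sum_le _ _ fun _ _ => measureReal_nonneg)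
  congr 1
  rw [sum_measureReal_preimage_singleton _ fun a _ => hf (measurableSet_singleton a)]
  congr 1
  ext ω
  simp

lemma sum_measureReal_fibers (P : Measure Ω) [IsProbabilityMeasure P] {f : Ω → α}
    (hf : Measurable f) : ∑ a, P.real (f ⁻¹' {a}) = 1 := by
  rw [sum_measureReal_preimage_singleton _ fun a _ => hf (measurableSet_singleton a)]
  simp

lemma partEntropy_le_log_card (P : Measure Ω) [IsProbabilityMeasure P] {f : Ω → α}
    (hf : Measurable f) : partEntropy P f ≤ Real.log (Fintype.card α) := by
  have : Nonempty α := (nonempty_of_isProbabilityMeasure P).map f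
  have hpos : (0 : ℝ) < Fintype.card α := by exact_mod_cast Fintype.card_pos
  have h := Real.concaveOn_negMulLog.le_map_sum (t := Finset.univ)
    (w := fun _ => (Fintype.card α : ℝ)⁻¹) (p := fun a => P.real (f ⁻¹' {a}))
    (fun _ _ => by positivity) (by simp [hpos.ne']) (fun _ _ => measureReal_nonneg)
  simp only [smul_eq_mul, ← Finset.mul_sum, sum_measureReal_fibers P hf, mul_one] at h
  rw [Real.negMulLog, Real.log_inv, neg_mul_neg] at h
  exact le_of_mul_le_mul_left h (inv_pos.2 hpos)

lemma partEntropy_infinitePi (p : Measure α) [IsProbabilityMeasure p] (s q : ℕ) :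
    partEntropy (Measure.infinitePi fun _ : ℕ => p) (fun ω (i : Fin q) => ω (s + i)) =
      q * ∑ a, Real.negMulLog (p.real {a}) := by
  have hp : ∑ a, p.real {a} = 1 := by
    rw [sum_measureReal_singleton]; simp
  rw [← sum_negMulLog_prod _ hp]
  refine Finset.sum_congr rfl fun a _ => ?_
  have hinj : Function.Injective fun i : Fin q => s + (i : ℕ) := fun i j h =>
    Fin.ext (Nat.add_left_cancel h)
  rw [← map_measureReal_apply (by fun_prop) (measurableSet_singleton a),
    Measure.map_infinitePi_infinitePi_of_inj (P := fun _ : ℕ => p) hinj, measureReal_def,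
    Measure.infinitePi_singleton_of_fintype, ENNReal.toReal_prod]
  rfl

lemma le_partEntropy_average {n : ℕ} (hn : 0 < n) (ν : Measure Ω) (P : ℕ → Measure Ω)
    (hν : ∀ s, MeasurableSet s → ν.real s = (n : ℝ)⁻¹ * ∑ k ∈ Finset.range n, (P k).real s)
    {f : Ω → α} (hf : Measurable f) :
    (n : ℝ)⁻¹ * ∑ k ∈ Finset.range n, partEntropy (P k) f ≤ partEntropy ν f := by
  have hn' : (n : ℝ) ≠ 0 := by positivity
  unfold partEntropy
  rw [Finset.sum_comm, Finset.mul_sum]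
  refine Finset.sum_le_sum fun a _ => ?_
  rw [hν _ (hf (measurableSet_singleton a))]
  have := Real.concaveOn_negMulLog.le_map_sum (t := Finset.range n) (w := fun _ => (n : ℝ)⁻¹)
    (p := fun k => (P k).real (f ⁻¹' {a})) (fun _ _ => by positivity) (by simp [hn'])
    (fun _ _ => measureReal_nonneg)
  simpa only [smul_eq_mul, ← Finset.mul_sum] using this

lemma partEntropy_average_le {n : ℕ} (hn : 0 < n) (ν : Measure Ω) (P : ℕ → Measure Ω)
    [∀ k, IsProbabilityMeasure (P k)]
    (hν : ∀ s, MeasurableSet s → ν.real s = (n : ℝ)⁻¹ * ∑ k ∈ Finset.range n, (P k).real s)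
    {f : Ω → α} (hf : Measurable f) :
    partEntropy ν f ≤ (n : ℝ)⁻¹ * ∑ k ∈ Finset.range n, partEntropy (P k) f + Real.log n := by
  have hn' : (n : ℝ) ≠ 0 := by positivity
  calc partEntropy ν f
      ≤ ∑ a, ∑ k ∈ Finset.range n, Real.negMulLog ((n : ℝ)⁻¹ * (P k).real (f ⁻¹' {a})) := by
        refine Finset.sum_le_sum fun a _ => ?_
        rw [hν _ (hf (measurableSet_singleton a)), Finset.mul_sum]
        exact negMulLog_sum_le _ _ fun _ _ => by positivity
    _ = ∑ k ∈ Finset.range n, ((n : ℝ)⁻¹ * partEntropy (P k) f + (n : ℝ)⁻¹ * Real.log n) := by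
        rw [Finset.sum_comm]
        refine Finset.sum_congr rfl fun k _ => ?_
        simp only [Real.negMulLog_mul, Finset.sum_add_distrib, ← Finset.sum_mul,
          ← Finset.mul_sum, sum_measureReal_fibers (P k) hf, partEntropy]
        simp only [Real.negMulLog, Real.log_inv]
        ring
    _ = _ := by
        rw [Finset.sum_add_distrib, ← Finset.mul_sum]
        simp [hn']
end PartitionEntropy

lemma measure_infinitePi_zero_or_one_of_shift_invariant {α : Type*} [MeasurableSpace α]
    (p : Measure α) [IsProbabilityMeasure p] {A : Set (ℕ → α)} (hA : MeasurableSet A)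
    (hinv : (fun (ω : ℕ → α) i => ω (i + 1)) ⁻¹' A = A) :
    Measure.infinitePi (fun _ : ℕ => p) A = 0 ∨ Measure.infinitePi (fun _ : ℕ => p) A = 1 := by
  refine ProbabilityTheory.measure_zero_or_one_of_measurableSet_limsup_atTop
    (s := fun i => MeasurableSpace.comap (fun ω : ℕ → α => ω i) inferInstance)
    (fun i => (measurable_pi_apply i).comap_le)
    (ProbabilityTheory.iIndepFun_infinitePi (P := fun _ : ℕ => p) (X := fun _ a => a)
      fun _ => measurable_id) ?_
  have hiter (k : ℕ) : (fun (ω : ℕ → α) i => ω (i + k)) ⁻¹' A = A := by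
    induction k with
    | zero => rfl
    | succ k ih =>
      conv_rhs => rw [← ih, ← hinv]
      ext ω
      simp only [mem_preimage]
      congr! 3
      ring_nf
  rw [limsup_eq_iInf_iSup_of_nat, MeasurableSpace.measurableSet_iInf]
  intro k
  rw [← hiter k]
  refine @measurable_pi_lambda _ _ _ (_) _ (fun (ω : ℕ → α) i => ω (i + k)) (fun i => ?_) _ hA
  refine Measurable.mono (comap_measurable fun ω : ℕ → α => ω (i + k)) ?_ le_rfl
  exact le_iSup₂_of_le (i + k) (Nat.le_add_left k i) le_rfl

/-- Concatenation of a sequence of words of length `n`. -/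
def flatten {N : ℕ} (n : ℕ) [NeZero n] (ω : ℕ → Fin n → Fin N) : Seq N :=
  fun i => ω (i / n) (Fin.ofNat n i)

/-- The first `n` letters of a sequence. -/
def initialWord {N : ℕ} (n : ℕ) (x : Seq N) : Fin n → Fin N := fun i => x i

section BlockMeasure

variable {N : ℕ}

@[fun_prop]
lemma measurable_shift : Measurable (shift : Seq N → Seq N) := by
  unfold shift; fun_prop

@[fun_prop]
lemma measurable_initialWord (n : ℕ) : Measurable (initialWord n : Seq N → _) := by
  unfold initialWord; fun_prop

@[fun_prop]
lemma measurable_flatten (n : ℕ) [NeZero n] : Measurable (flatten n : _ → Seq N) := by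
  unfold flatten; fun_prop

lemma shift_iterate_apply (k : ℕ) (x : Seq N) (i : ℕ) : shift^[k] x i = x (k + i) := by
  induction k generalizing x with
  | zero => simp
  | succ k ih =>
    rw [Function.iterate_succ_apply, ih]
    simp only [shift]
    congr 1
    ring

lemma entropyAux_eq_partEntropy (μ : ProbabilityMeasure (Seq N)) (n : ℕ) :
    entropyAux μ n = partEntropy μ.toMeasure (initialWord n) := by
  rw [entropyAux, partEntropy, ← Finset.sum_neg_distrib]
  refine Finset.sum_congr rfl fun w _ => ?_
  have : cylinder (List.ofFn w) = initialWord n ⁻¹' {w} := by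
    ext x
    simp only [cylinder, mem_ofPred_eq, List.length_ofFn, mem_preimage, mem_singleton_iff,
      funext_iff, initialWord]
    constructor
    · intro h i
      simpa using h i i.2
    · intro h k hk
      simpa using h ⟨k, hk⟩
  rw [this, Real.negMulLog, neg_mul]
  rfl

lemma Invariant.map_iterate {μ : ProbabilityMeasure (Seq N)} (hμ : Invariant μ) (k : ℕ) :
    μ.toMeasure.map (shift^[k]) = μ.toMeasure :=
  ((⟨measurable_shift, hμ⟩ : MeasurePreserving shift μ.toMeasure μ.toMeasure).iterate k).map_eq

variable (μ : ProbabilityMeasure (Seq N)) (n : ℕ)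

/-- The law of an infinite sequence of independent words of length `n`, each distributed as the
first `n` letters under `μ`. -/
noncomputable def bernoulliBlocks : Measure (ℕ → Fin n → Fin N) :=
  Measure.infinitePi fun _ => μ.toMeasure.map (initialWord n)

instance : IsProbabilityMeasure (μ.toMeasure.map (initialWord n)) :=
  Measure.isProbabilityMeasure_map (by fun_prop)

instance : IsProbabilityMeasure (bernoulliBlocks μ n) := by
  unfold bernoulliBlocks; infer_instance

lemma entropyAux_le : entropyAux μ n ≤ n * Real.log N := by
  rw [entropyAux_eq_partEntropy]
  refine (partEntropy_le_log_card _ (measurable_initialWord n)).trans_eq ?_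
  simp

lemma sum_negMulLog_initialWord :
    ∑ a, Real.negMulLog ((μ.toMeasure.map (initialWord n)).real {a}) = entropyAux μ n := by
  rw [entropyAux_eq_partEntropy, partEntropy]
  refine Finset.sum_congr rfl fun a _ => ?_
  rw [map_measureReal_apply (by fun_prop) (measurableSet_singleton a)]

lemma entropyAux_nonneg : 0 ≤ entropyAux μ n := by
  rw [entropyAux_eq_partEntropy]
  exact partEntropy_nonneg _ _

variable [NeZero n]

/-- The law of the concatenation of independent `n`-blocks, read from position `k` on. -/
noncomputable def blockLaw (k : ℕ) : Measure (Seq N) :=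
  (bernoulliBlocks μ n).map (shift^[k] ∘ flatten n)

lemma measurable_shift_flatten (k : ℕ) :
    Measurable (shift^[k] ∘ flatten n : _ → Seq N) :=
  (measurable_shift.iterate k).comp (measurable_flatten n)

instance (k : ℕ) : IsProbabilityMeasure (blockLaw μ n k) :=
  Measure.isProbabilityMeasure_map (measurable_shift_flatten n k).aemeasurable

lemma map_shift_blockLaw (k : ℕ) : (blockLaw μ n k).map shift = blockLaw μ n (k + 1) := by
  rw [blockLaw, Measure.map_map measurable_shift (measurable_shift_flatten n k),
    ← Function.comp_assoc, ← Function.iterate_succ']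
  rfl

lemma shift_iterate_flatten (ω : ℕ → Fin n → Fin N) :
    shift^[n] (flatten n ω) = flatten n fun i => ω (i + 1) := by
  ext i
  have hn : 0 < n := Nat.pos_of_neZero n
  have h : Fin.ofNat n (n + i) = Fin.ofNat n i := Fin.ext (by simp [Fin.ofNat])
  simp only [shift_iterate_apply, flatten, h, Nat.add_div_left i hn]

lemma blockLaw_self : blockLaw μ n n = blockLaw μ n 0 := by
  have h : (shift^[n] ∘ flatten n : _ → Seq N) = flatten n ∘ fun ω i => ω (i + 1) :=
    funext (shift_iterate_flatten n)
  rw [blockLaw, h, ← Measure.map_map (by fun_prop) (by fun_prop), bernoulliBlocks,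
    Measure.map_infinitePi_infinitePi_of_inj
      (P := fun _ : ℕ => μ.toMeasure.map (initialWord n)) (add_left_injective 1)]
  rfl

/-- The stationary average of the laws of concatenations of independent `n`-blocks. -/
noncomputable def blockMeasure : ProbabilityMeasure (Seq N) :=
  ⟨(n : ℝ≥0∞)⁻¹ • ∑ k ∈ Finset.range n, blockLaw μ n k, ⟨by
    simp only [Measure.smul_apply, Measure.coe_finsetSum, Finset.sum_apply, measure_univ,
      Finset.sum_const, Finset.card_range, nsmul_eq_mul, mul_one, smul_eq_mul]
    exact ENNReal.inv_mul_cancel (NeZero.ne _) (ENNReal.natCast_ne_top n)⟩⟩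

lemma blockMeasure_apply (s : Set (Seq N)) : (blockMeasure μ n).toMeasure s =
    (n : ℝ≥0∞)⁻¹ * ∑ k ∈ Finset.range n, blockLaw μ n k s := by
  simp [blockMeasure]

lemma blockMeasure_real (s : Set (Seq N)) : (blockMeasure μ n).toMeasure.real s =
    (n : ℝ)⁻¹ * ∑ k ∈ Finset.range n, (blockLaw μ n k).real s := by
  rw [measureReal_def, blockMeasure_apply, ENNReal.toReal_mul,
    ENNReal.toReal_sum fun _ _ => measure_ne_top _ _]
  simp [measureReal_def]

lemma invariant_blockMeasure : Invariant (blockMeasure μ n) := by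
  have h : ∑ k ∈ Finset.range n, blockLaw μ n (k + 1) = ∑ k ∈ Finset.range n, blockLaw μ n k := by
    have h1 := Finset.sum_range_succ (blockLaw μ n) n
    rw [Finset.sum_range_succ', blockLaw_self] at h1
    ext s hs
    have h2 := congrArg (fun ν : Measure (Seq N) => ν s) h1
    simp only [Measure.add_apply] at h2
    exact (ENNReal.add_left_inj (measure_ne_top _ _)).1 h2
  simp only [Invariant, blockMeasure, ProbabilityMeasure.coe_mk, Measure.map_smul]
  rw [← Measure.mapₗ_apply_of_measurable measurable_shift, map_sum]
  simp only [Measure.mapₗ_apply_of_measurable measurable_shift, map_shift_blockLaw, h]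

lemma ergodic_blockMeasure : Ergodic shift (blockMeasure μ n).toMeasure := by
  refine ⟨⟨measurable_shift, invariant_blockMeasure μ n⟩, ⟨fun A hA hinv => ?_⟩⟩
  have hiter (k : ℕ) : shift^[k] ⁻¹' A = A := Function.IsFixedPt.preimage_iterate hinv k
  have hlaw (k : ℕ) : blockLaw μ n k A = bernoulliBlocks μ n (flatten n ⁻¹' A) := by
    rw [blockLaw, Measure.map_apply (measurable_shift_flatten n k) hA, preimage_comp, hiter]
  have hblock : (blockMeasure μ n).toMeasure A = bernoulliBlocks μ n (flatten n ⁻¹' A) := by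
    rw [blockMeasure_apply]
    simp only [hlaw, Finset.sum_const, Finset.card_range, nsmul_eq_mul, ← mul_assoc]
    rw [ENNReal.inv_mul_cancel (NeZero.ne _) (ENNReal.natCast_ne_top n), one_mul]
  have hshift : (fun (ω : ℕ → Fin n → Fin N) i => ω (i + 1)) ⁻¹' (flatten n ⁻¹' A) =
      flatten n ⁻¹' A := by
    conv_rhs => rw [← hiter n]
    ext ω
    simp only [mem_preimage, shift_iterate_flatten]
  rw [eventuallyConst_set']
  rcases measure_infinitePi_zero_or_one_of_shift_invariant
    (μ.toMeasure.map (initialWord n)) (measurable_flatten n hA) hshift with h | h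
  · left
    rw [ae_eq_empty, hblock]
    exact h
  · right
    rw [ae_eq_univ_iff_measure_eq hA.nullMeasurableSet, hblock, measure_univ]
    exact h

lemma partEntropy_blockLaw_le (k m q : ℕ) (h : k + m ≤ q * n) :
    partEntropy (blockLaw μ n k) (initialWord m) ≤ q * entropyAux μ n := by
  rw [blockLaw, partEntropy_map _ (measurable_shift_flatten n k) (measurable_initialWord m),
    ← sum_negMulLog_initialWord, ← partEntropy_infinitePi _ 0 q]
  have hlt (i : Fin m) : (k + i) / n < q := by
    rw [Nat.div_lt_iff_lt_mul (Nat.pos_of_neZero n)]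
    omega
  refine le_of_eq_of_le ?_ (partEntropy_comp_le _ (by fun_prop)
    fun (a : Fin q → Fin n → Fin N) (i : Fin m) => a ⟨(k + i) / n, hlt i⟩ (Fin.ofNat n (k + i)))
  congr 1
  ext ω i
  simp [initialWord, shift_iterate_apply, flatten]

lemma le_partEntropy_blockLaw (k m q : ℕ) (hk : k ≤ n) (h : (1 + q) * n ≤ k + m) :
    q * entropyAux μ n ≤ partEntropy (blockLaw μ n k) (initialWord m) := by
  rw [blockLaw, partEntropy_map _ (measurable_shift_flatten n k) (measurable_initialWord m),
    ← sum_negMulLog_initialWord, ← partEntropy_infinitePi _ 1 q]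
  have hlt (i : Fin q) (j : Fin n) : (1 + i) * n + j - k < m := by
    have : (2 + i) * n ≤ (1 + q) * n := Nat.mul_le_mul_right _ (by omega)
    have := j.2
    have : n ≤ (1 + i) * n := Nat.le_mul_of_pos_left n (by omega)
    have : (2 + (i : ℕ)) * n = (1 + i) * n + n := by ring
    omega
  refine le_of_eq_of_le ?_ (partEntropy_comp_le _
    ((measurable_initialWord m).comp (measurable_shift_flatten n k))
    fun (a : Fin m → Fin N) (i : Fin q) (j : Fin n) => a ⟨(1 + i) * n + j - k, hlt i j⟩)
  congr 1
  ext ω i j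
  have h1 : k + ((1 + i) * n + j - k) = j + n * (1 + i) := by
    have : n ≤ (1 + i) * n := Nat.le_mul_of_pos_left n (by omega)
    rw [mul_comm n]
    omega
  have h2 : Fin.ofNat n (j + n * (1 + i)) = j :=
    Fin.ext (by simp [Fin.ofNat, Nat.mod_eq_of_lt j.2])
  simp only [initialWord, Function.comp_apply, shift_iterate_apply, flatten, h1, h2]
  rw [Nat.add_mul_div_left _ _ (Nat.pos_of_neZero n), Nat.div_eq_of_lt j.2, zero_add]

lemma entropyAux_blockMeasure_le (m : ℕ) :
    entropyAux (blockMeasure μ n) m ≤ (m / n + 2) * entropyAux μ n + Real.log n := by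
  have hn : 0 < n := Nat.pos_of_neZero n
  rw [entropyAux_eq_partEntropy]
  refine (partEntropy_average_le hn _ (blockLaw μ n) (fun s _ => blockMeasure_real μ n s)
    (measurable_initialWord m)).trans (add_le_add ?_ le_rfl)
  rw [inv_mul_le_iff₀ (by positivity)]
  refine (Finset.sum_le_card_nsmul _ _ ((m / n + 2) * entropyAux μ n) fun k hk => ?_).trans
    (by simp)
  have h := Nat.div_add_mod m n
  have h' := Nat.mod_lt m hn
  refine (partEntropy_blockLaw_le μ n k m (m / n + 2) ?_).trans ?_
  · have := Finset.mem_range.1 hk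
    have : (m / n + 2) * n = n * (m / n) + 2 * n := by ring
    omega
  · refine mul_le_mul_of_nonneg_right ?_ (entropyAux_nonneg μ n)
    push_cast
    gcongr
    exact Nat.cast_div_le

lemma le_entropyAux_blockMeasure (m : ℕ) :
    (m / n - 2) * entropyAux μ n ≤ entropyAux (blockMeasure μ n) m := by
  have hn : 0 < n := Nat.pos_of_neZero n
  rw [entropyAux_eq_partEntropy (blockMeasure μ n)]
  refine le_trans ?_ (le_partEntropy_average hn _ (blockLaw μ n)
    (fun s _ => blockMeasure_real μ n s) (measurable_initialWord m))
  rw [le_inv_mul_iff₀ (by positivity)]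
  refine le_trans (by simp) (Finset.card_nsmul_le_sum _ _ ((m / n - 2) * entropyAux μ n)
    fun k hk => ?_)
  have hdiv : (m : ℝ) / n < (m / n : ℕ) + 1 := by
    rw [div_lt_iff₀ (by positivity)]
    exact_mod_cast Nat.lt_mul_of_div_lt (Nat.lt_succ_self _) hn
  rcases Nat.eq_zero_or_pos (m / n) with h0 | h0
  · refine (mul_nonpos_of_nonpos_of_nonneg ?_ (entropyAux_nonneg μ n)).trans
      (partEntropy_nonneg _ _)
    rw [h0] at hdiv
    push_cast at hdiv
    linarith
  refine le_trans ?_ (le_partEntropy_blockLaw μ n k m (m / n - 1) (Finset.mem_range.1 hk).le ?_)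
  · refine mul_le_mul_of_nonneg_right ?_ (entropyAux_nonneg μ n)
    rw [Nat.cast_sub h0]
    push_cast
    linarith
  · rw [Nat.add_sub_cancel' h0]
    exact (Nat.div_mul_le_self m n).trans (Nat.le_add_left m k)

lemma entropy_blockMeasure : entropy (blockMeasure μ n) = entropyAux μ n / n := by
  refine Tendsto.liminf_eq ?_
  have hn : (n : ℝ) ≠ 0 := NeZero.ne _
  have hlim (c : ℝ) : Tendsto (fun m : ℕ => entropyAux μ n / n + c / m) atTop
      (𝓝 (entropyAux μ n / n)) := by
    simpa using tendsto_const_nhds.add (tendsto_const_div_atTop_nhds_zero_nat c)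
  refine tendsto_of_tendsto_of_tendsto_of_le_of_le' (hlim (-2 * entropyAux μ n))
    (hlim (2 * entropyAux μ n + Real.log n)) ?_ ?_
  all_goals
    filter_upwards [eventually_gt_atTop 0] with m hm
    have hm' : (0 : ℝ) < m := by exact_mod_cast hm
  · rw [le_div_iff₀ hm']
    refine le_of_eq_of_le ?_ (le_entropyAux_blockMeasure μ n m)
    field_simp
    ring
  · rw [div_le_iff₀ hm']
    refine (entropyAux_blockMeasure_le μ n m).trans_eq ?_
    field_simp
    ring

variable {μ}

lemma blockLaw_apply_of_dependsOn (hμ : Invariant μ) {A : Set (Seq N)} (hA : MeasurableSet A)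
    {L k : ℕ} (hkL : k + L ≤ n) (hdep : ∀ x y : Seq N, (∀ i < L, x i = y i) → x ∈ A → y ∈ A) :
    blockLaw μ n k A = μ.toMeasure A := by
  set B := shift^[k] ⁻¹' A with hB
  have hBmeas : MeasurableSet B := (measurable_shift.iterate k) hA
  have hpre : B = initialWord n ⁻¹' (initialWord n '' B) := by
    refine (subset_preimage_image _ _).antisymm ?_
    rintro y ⟨x, hx, hxy⟩
    refine hdep _ _ (fun i hi => ?_) hx
    rw [shift_iterate_apply, shift_iterate_apply]
    exact congrFun hxy ⟨k + i, by omega⟩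
  have hfst : (initialWord n ∘ flatten n : (ℕ → Fin n → Fin N) → _) = fun ω => ω 0 := by
    ext ω i
    have : Fin.ofNat n i = i := Fin.ext (by simp [Fin.ofNat, Nat.mod_eq_of_lt i.2])
    simp only [Function.comp_apply, initialWord, flatten, Nat.div_eq_of_lt i.2, this]
  have hT : MeasurableSet (initialWord n '' B) := (Set.toFinite _).measurableSet
  calc blockLaw μ n k A =
        bernoulliBlocks μ n ((initialWord n ∘ flatten n) ⁻¹' (initialWord n '' B)) := by
        rw [blockLaw, Measure.map_apply (measurable_shift_flatten n k) hA, preimage_comp, ← hB,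
          preimage_comp, ← hpre]
    _ = μ.toMeasure B := by
        rw [hfst, ← Measure.map_apply (by fun_prop) hT, bernoulliBlocks,
          Measure.infinitePi_map_eval (fun _ : ℕ => μ.toMeasure.map (initialWord n)) 0,
          Measure.map_apply (by fun_prop) hT, ← hpre]
    _ = μ.toMeasure A := by
        rw [hB, ← Measure.map_apply (measurable_shift.iterate k) hA, hμ.map_iterate]

lemma abs_blockMeasure_sub_le (hμ : Invariant μ) {A : Set (Seq N)} (hA : MeasurableSet A)
    {L : ℕ} (hdep : ∀ x y : Seq N, (∀ i < L, x i = y i) → x ∈ A → y ∈ A) :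
    |(blockMeasure μ n).toMeasure.real A - μ.toMeasure.real A| ≤ L / n := by
  have hn : (n : ℝ) ≠ 0 := NeZero.ne _
  have hpos : 0 < (n : ℝ) := by positivity
  have hsum : (blockMeasure μ n).toMeasure.real A - μ.toMeasure.real A =
      (n : ℝ)⁻¹ * ∑ k ∈ Finset.range n, ((blockLaw μ n k).real A - μ.toMeasure.real A) := by
    rw [blockMeasure_real, Finset.sum_sub_distrib, mul_sub]
    simp [hn]
  rw [hsum, abs_mul, abs_of_pos (inv_pos.2 hpos), inv_mul_le_iff₀ hpos, mul_div_cancel₀ _ hn]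
  calc |∑ k ∈ Finset.range n, ((blockLaw μ n k).real A - μ.toMeasure.real A)|
      ≤ ∑ k ∈ Finset.range n, |(blockLaw μ n k).real A - μ.toMeasure.real A| :=
        Finset.abs_sum_le_sum_abs _ _
    _ ≤ ∑ k ∈ Finset.range n, if n - L ≤ k then 1 else 0 := by
        refine Finset.sum_le_sum fun k _ => ?_
        split_ifs with h
        · exact abs_sub_le_of_nonneg_of_le measureReal_nonneg measureReal_le_one
            measureReal_nonneg measureReal_le_one
        · rw [measureReal_def, blockLaw_apply_of_dependsOn n hμ hA (by omega) hdep,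
            measureReal_def, sub_self, abs_zero]
    _ = ((Finset.Ico (n - L) n).card : ℝ) := by
        rw [Finset.sum_boole]
        congr 2
        ext k
        simp [and_comm]
    _ ≤ L := by
        rw [Nat.card_Ico]
        exact_mod_cast (by omega : n - (n - L) ≤ L)

end BlockMeasure

lemma tendsto_blockMeasure {N : ℕ} {μ : ProbabilityMeasure (Seq N)} (hμ : Invariant μ) {φ : ℕ → ℕ}
    (hφ : Tendsto φ atTop atTop) :
    Tendsto (fun j => blockMeasure μ (φ j + 1)) atTop (𝓝 μ) := by
  refine IsPiSystem.tendsto_probabilityMeasure_of_tendsto_of_mem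
    (isPiSystem_measurableCylinders (α := fun _ : ℕ => Fin N))
    (fun s hs => MeasurableSet.of_mem_measurableCylinders hs) (fun u hu x hx => ?_) fun s hs => ?_
  · obtain ⟨I, v, hv, hvu⟩ := isOpen_pi_iff.1 hu x hx
    refine ⟨(I : Set ℕ).pi v, ?_, ?_, hvu⟩
    · rw [mem_measurableCylinders]
      refine ⟨I, univ.pi fun i : I => v i, (Set.toFinite _).measurableSet, ?_⟩
      ext y
      simp
    · exact set_pi_mem_nhds I.finite_toSet fun i hi => (hv i hi).1.mem_nhds (hv i hi).2
  · have hs' := MeasurableSet.of_mem_measurableCylinders hs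
    obtain ⟨I, T, -, rfl⟩ := (mem_measurableCylinders s).1 hs
    obtain ⟨L, hL⟩ := I.exists_nat_subset_range
    have hdep (x y : Seq N) (hxy : ∀ i < L, x i = y i)
        (hx : x ∈ MeasureTheory.cylinder I T) : y ∈ MeasureTheory.cylinder I T := by
      rw [mem_cylinder] at hx ⊢
      convert hx using 1
      ext i
      simp [hxy i (Finset.mem_range.1 (hL i.2))]
    rw [← NNReal.tendsto_coe, tendsto_iff_norm_sub_tendsto_zero]
    refine squeeze_zero (fun _ => norm_nonneg _)
      (fun j => abs_blockMeasure_sub_le (φ j + 1) hμ hs' hdep) ?_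
    exact (tendsto_const_div_atTop_nhds_zero_nat (L : ℝ)).comp ((tendsto_add_atTop_nat 1).comp hφ)

/-- **Lemma 6.3.**  Every shift-invariant probability measure on the full shift with full
topological support is the weak limit of a sequence of ergodic shift-invariant probability
measures whose entropies converge to the entropy of the given measure. -/
theorem ergodic_approximation
    {N : ℕ} (hN : 0 < N) (μ : ProbabilityMeasure (Seq N))
    (hinv : Invariant μ)
    (hsupp : ∀ O : Set (Seq N), IsOpen O → O.Nonempty → 0 < μ.toMeasure O) :
    ∃ μs : ℕ → ProbabilityMeasure (Seq N),
      (∀ n, Invariant (μs n)) ∧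
      Filter.Tendsto μs Filter.atTop (nhds μ) ∧
      (∀ n, Ergodic shift (μs n).toMeasure) ∧
      Filter.Tendsto (fun n => entropy (μs n)) Filter.atTop (nhds (entropy μ)) := by
  set u : ℕ → ℝ := fun n => entropyAux μ (n + 1) / (n + 1 : ℕ) with hu
  have hlim : entropy μ = liminf u atTop :=
    (liminf_nat_add (fun n => entropyAux μ n / (n : ℝ)) 1).symm
  have hbelow : IsBoundedUnder (· ≥ ·) atTop u :=
    isBoundedUnder_of ⟨0, fun n => div_nonneg (entropyAux_nonneg μ _) (Nat.cast_nonneg _)⟩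
  have habove : IsBoundedUnder (· ≤ ·) atTop u := by
    refine isBoundedUnder_of ⟨Real.log N, fun n => ?_⟩
    rw [hu, div_le_iff₀ (by positivity), mul_comm]
    exact entropyAux_le μ (n + 1)
  obtain ⟨φ, hφ, hφu⟩ := MapClusterPt.tendsto_subseq
    (MapClusterPt.liminf habove.isCoboundedUnder_ge hbelow)
  refine ⟨fun j => blockMeasure μ (φ j + 1), fun j => invariant_blockMeasure μ _,
    tendsto_blockMeasure hinv hφ.tendsto_atTop, fun j => ergodic_blockMeasure μ _, ?_⟩
  simp only [entropy_blockMeasure, hlim]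
  exact hφu

end Multifractal
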